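/- Let C_n be the number of king permutations of length n that do not begin with the value 1 and do not end with the value n (with C_0 = 1, C_1 = 0), and let C(t) = Σ_{n≥0} C_n t^n. Then (1+t)^2·C(t) = t(1+t) + A(t) as formal power series over ℚ. -/

import Mathlib

/-- A permutation of `{0, …, n-1}` is a *king permutation* if consecutive entries
differ by more than 1 in absolute value. -/
def IsKing {n : ℕ} (σ : Equiv.Perm (Fin n)) : Prop :=
  ∀ i : Fin n, ∀ h : (i : ℕ) + 1 < n,
    1 < |((σ ⟨(i : ℕ) + 1, h⟩ : ℕ) : ℤ) - ((σ i : ℕ) : ℤ)|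

/-- `kingCount n = A_n`, the number of king permutations of length `n`. -/
noncomputable def kingCount (n : ℕ) : ℕ :=
  Nat.card {σ : Equiv.Perm (Fin n) // IsKing σ}

/-- `A(t) = Σ_{n≥0} A_n t^n` as a formal power series over `ℚ`. -/
noncomputable def kingA : PowerSeries ℚ :=
  PowerSeries.mk fun n => (kingCount n : ℚ)

/-- `Ccount n = C_n`, the number of king permutations of length `n` that do not
begin with the smallest value and do not end with the largest value. -/
noncomputable def Ccount (n : ℕ) : ℕ :=
  Nat.card {σ : Equiv.Perm (Fin n) // IsKing σ ∧
    (∀ h : 0 < n, σ ⟨0, h⟩ ≠ ⟨0, h⟩) ∧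
    (∀ h : 0 < n, σ ⟨n - 1, by omega⟩ ≠ ⟨n - 1, by omega⟩)}

/-- `C(t) = Σ_{n≥0} C_n t^n` as a formal power series over `ℚ`. -/
noncomputable def kingC : PowerSeries ℚ :=
  PowerSeries.mk fun n => (Ccount n : ℚ)

/-!
Deleting an initial minimum from a king permutation leaves a king permutation that does not begin
with its minimum, and every such permutation arises exactly once. With `B` the generating function
of the king permutations not beginning with the smallest value, this reads `A = (1 + t) B`.
Reversing both positions and values shows that `B` also counts the king permutations that do not
end with the largest value. Deleting an initial minimum from these gives `t + B = (1 + t) C`, where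
the term `t` corrects for length one: there the initial minimum is also the final maximum, so
deleting it does not preserve the condition on the last entry.
-/

theorem card_subtype_eq_add_of_injective {α β : Type*} [Finite α] {f : β → α}
    (hf : Function.Injective f) (P : α → Prop) :
    Nat.card {a // P a} = Nat.card {a // P a ∧ a ∉ Set.range f} + Nat.card {b // P (f b)} := by
  have card_preimage : (f ⁻¹' {a | P a}).ncard = ({a | P a} ∩ Set.range f).ncard := by
    rw [← Set.image_preimage_eq_inter_range, Set.ncard_image_of_injective _ hf]
  calc ({a | P a}).ncard
    _ = ({a | P a} \ Set.range f).ncard + ({a | P a} ∩ Set.range f).ncard := by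
        rw [add_comm, Set.ncard_inter_add_ncard_sdiff_eq_ncard]
    _ = ({a | P a} \ Set.range f).ncard + (f ⁻¹' {a | P a}).ncard := by rw [card_preimage]

theorem coeff_succ_one_add_X_mul {R : Type*} [Semiring R] (f : PowerSeries R) (n : ℕ) :
    PowerSeries.coeff (n + 1) ((1 + PowerSeries.X) * f)
      = PowerSeries.coeff (n + 1) f + PowerSeries.coeff n f := by
  rw [add_mul, one_mul, map_add, PowerSeries.coeff_succ_X_mul]

theorem coeff_zero_one_add_X_mul {R : Type*} [Semiring R] (f : PowerSeries R) :
    PowerSeries.coeff 0 ((1 + PowerSeries.X) * f) = PowerSeries.coeff 0 f := by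
  rw [add_mul, one_mul, map_add, PowerSeries.coeff_zero_X_mul, add_zero]

section Perm

variable {n : ℕ}

/-- The permutation does not begin with the smallest value. It holds vacuously for `n = 0`. -/
def AvoidsMinFirst (σ : Equiv.Perm (Fin n)) : Prop :=
  ∀ h : 0 < n, σ ⟨0, h⟩ ≠ ⟨0, h⟩

/-- The permutation does not end with the largest value. It holds vacuously for `n = 0`. -/
def AvoidsMaxLast (σ : Equiv.Perm (Fin n)) : Prop :=
  ∀ h : 0 < n, σ ⟨n - 1, by omega⟩ ≠ ⟨n - 1, by omega⟩

/-- The permutation `0, σ 0 + 1, …, σ (n - 1) + 1`, which puts a new minimum in front of the word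
of `σ`; it inverts the deletion of an initial minimum. -/
def prependMin (σ : Equiv.Perm (Fin n)) : Equiv.Perm (Fin (n + 1)) :=
  Equiv.Perm.decomposeFin.symm (0, σ)

/-- The symmetry of the permutations of `Fin n` that reverses both positions and values; it
exchanges an initial minimum with a final maximum. -/
def reverseComplement : Equiv.Perm (Fin n) ≃ Equiv.Perm (Fin n) :=
  Fin.revPerm.permCongr

theorem avoidsMinFirst_iff_zero {σ : Equiv.Perm (Fin (n + 1))} : AvoidsMinFirst σ ↔ σ 0 ≠ 0 :=
  forall_prop_of_true n.succ_pos

theorem avoidsMaxLast_iff_last {σ : Equiv.Perm (Fin (n + 1))} :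
    AvoidsMaxLast σ ↔ σ (Fin.last n) ≠ Fin.last n :=
  forall_prop_of_true n.succ_pos

theorem isKing_iff_succ_castSucc {σ : Equiv.Perm (Fin (n + 1))} :
    IsKing σ ↔ ∀ i : Fin n, 1 < |((σ i.succ : ℕ) : ℤ) - ((σ i.castSucc : ℕ) : ℤ)| :=
  ⟨fun h i => h i.castSucc (Nat.succ_lt_succ i.isLt),
    fun h i hi => h ⟨i, Nat.lt_of_succ_lt_succ hi⟩⟩

@[simp]
theorem prependMin_zero (σ : Equiv.Perm (Fin n)) : prependMin σ 0 = 0 := by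
  simp [prependMin]

@[simp]
theorem prependMin_succ (σ : Equiv.Perm (Fin n)) (i : Fin n) :
    prependMin σ i.succ = (σ i).succ := by
  simp [prependMin]

theorem prependMin_injective :
    Function.Injective (prependMin : Equiv.Perm (Fin n) → Equiv.Perm (Fin (n + 1))) :=
  Equiv.Perm.decomposeFin.symm.injective.comp (Prod.mk_right_injective 0)

theorem mem_range_prependMin_iff {τ : Equiv.Perm (Fin (n + 1))} :
    τ ∈ Set.range prependMin ↔ τ 0 = 0 := by
  constructor
  · rintro ⟨σ, rfl⟩
    exact prependMin_zero σ
  · obtain ⟨⟨p, σ⟩, rfl⟩ := Equiv.Perm.decomposeFin.symm.surjective τ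
    rw [Equiv.Perm.decomposeFin_symm_apply_zero]
    rintro rfl
    exact ⟨σ, rfl⟩

theorem isKing_prependMin_iff {σ : Equiv.Perm (Fin n)} :
    IsKing (prependMin σ) ↔ IsKing σ ∧ AvoidsMinFirst σ := by
  rcases n with _ | n
  · rw [isKing_iff_succ_castSucc]
    simp [IsKing, AvoidsMinFirst]
  have first_step : 1 < |((prependMin σ (Fin.succ 0) : ℕ) : ℤ)
      - ((prependMin σ (Fin.castSucc 0) : ℕ) : ℤ)| ↔ σ 0 ≠ 0 := by
    rw [prependMin_succ, Fin.castSucc_zero, prependMin_zero, lt_abs, ne_eq, Fin.ext_iff,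
      Fin.val_succ, Fin.val_zero, Fin.val_zero]
    omega
  rw [isKing_iff_succ_castSucc, Fin.forall_fin_succ, first_step, and_comm,
    avoidsMinFirst_iff_zero, isKing_iff_succ_castSucc]
  simp

theorem avoidsMaxLast_prependMin_iff {σ : Equiv.Perm (Fin (n + 1))} :
    AvoidsMaxLast (prependMin σ) ↔ AvoidsMaxLast σ := by
  rw [avoidsMaxLast_iff_last, avoidsMaxLast_iff_last, ← Fin.succ_last, prependMin_succ,
    (Fin.succ_injective _).ne_iff]

theorem reverseComplement_apply (σ : Equiv.Perm (Fin n)) (i : Fin n) :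
    reverseComplement σ i = (σ i.rev).rev :=
  rfl

theorem isKing_reverseComplement_iff {σ : Equiv.Perm (Fin n)} :
    IsKing (reverseComplement σ) ↔ IsKing σ := by
  rcases n with _ | n
  · simp [IsKing]
  rw [isKing_iff_succ_castSucc, isKing_iff_succ_castSucc]
  refine Fin.revPerm.forall_congr fun i => ?_
  rw [reverseComplement_apply, reverseComplement_apply, Fin.rev_succ, Fin.rev_castSucc,
    Fin.revPerm_apply, Fin.val_rev, Fin.val_rev, lt_abs, lt_abs]
  omega

theorem avoidsMinFirst_reverseComplement_iff {σ : Equiv.Perm (Fin n)} :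
    AvoidsMinFirst (reverseComplement σ) ↔ AvoidsMaxLast σ := by
  rcases n with _ | n
  · simp [AvoidsMinFirst, AvoidsMaxLast]
  rw [avoidsMinFirst_iff_zero, avoidsMaxLast_iff_last, reverseComplement_apply, Fin.rev_zero,
    ne_eq, Fin.rev_eq_iff, Fin.rev_zero]

theorem card_eq_card_avoidsMinFirst_add_card_prependMin (P : Equiv.Perm (Fin (n + 1)) → Prop) :
    Nat.card {τ // P τ} =
      Nat.card {τ // P τ ∧ AvoidsMinFirst τ} + Nat.card {σ // P (prependMin σ)} := by
  simpa only [mem_range_prependMin_iff, avoidsMinFirst_iff_zero]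
    using card_subtype_eq_add_of_injective prependMin_injective P

end Perm

/-- The number `B_n` of king permutations of length `n` that do not begin with the smallest value,
the intermediate count between `A_n` and `C_n`. -/
noncomputable def Bcount (n : ℕ) : ℕ :=
  Nat.card {σ : Equiv.Perm (Fin n) // IsKing σ ∧ AvoidsMinFirst σ}

/-- `B(t) = Σ_{n≥0} B_n t^n` as a formal power series over `ℚ`. -/
noncomputable def kingB : PowerSeries ℚ :=
  PowerSeries.mk fun n => (Bcount n : ℚ)

theorem Bcount_eq_card_avoidsMaxLast (n : ℕ) :
    Bcount n = Nat.card {σ : Equiv.Perm (Fin n) // IsKing σ ∧ AvoidsMaxLast σ} :=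
  (Nat.card_congr <| reverseComplement.subtypeEquiv fun _ =>
    (and_congr isKing_reverseComplement_iff avoidsMinFirst_reverseComplement_iff).symm).symm

theorem kingCount_succ (n : ℕ) : kingCount (n + 1) = Bcount (n + 1) + Bcount n := by
  simpa only [isKing_prependMin_iff]
    using! card_eq_card_avoidsMinFirst_add_card_prependMin (n := n) IsKing

theorem Bcount_add_two (n : ℕ) : Bcount (n + 2) = Ccount (n + 2) + Ccount (n + 1) := by
  rw [Bcount_eq_card_avoidsMaxLast, card_eq_card_avoidsMinFirst_add_card_prependMin]
  simp only [isKing_prependMin_iff, avoidsMaxLast_prependMin_iff, and_assoc,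
    and_comm (a := AvoidsMaxLast _)]
  rfl

theorem kingCount_zero : kingCount 0 = 1 := by
  simp [kingCount, IsKing]

theorem Bcount_zero : Bcount 0 = 1 := by
  simp [Bcount, IsKing, AvoidsMinFirst]

theorem Bcount_one : Bcount 1 = 0 :=
  Finite.card_eq_zero_iff.2 ⟨fun σ => σ.2.2 one_pos (Subsingleton.elim _ _)⟩

theorem Ccount_zero : Ccount 0 = 1 := by
  simp [Ccount, IsKing]

theorem Ccount_one : Ccount 1 = 0 :=
  Finite.card_eq_zero_iff.2 ⟨fun σ => σ.2.2.1 one_pos (Subsingleton.elim _ _)⟩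

theorem one_add_X_mul_kingB : (1 + PowerSeries.X) * kingB = kingA := by
  ext (_ | n)
  · simp [coeff_zero_one_add_X_mul, kingA, kingB, kingCount_zero, Bcount_zero]
  · simp [coeff_succ_one_add_X_mul, kingA, kingB, kingCount_succ]

theorem one_add_X_mul_kingC : (1 + PowerSeries.X) * kingC = PowerSeries.X + kingB := by
  ext (_ | _ | n)
  · simp [coeff_zero_one_add_X_mul, kingB, kingC, Bcount_zero, Ccount_zero]
  · simp [coeff_succ_one_add_X_mul, kingB, kingC, Bcount_one, Ccount_zero, Ccount_one]
  · simp [coeff_succ_one_add_X_mul, kingB, kingC, Bcount_add_two, PowerSeries.coeff_X]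

theorem statement_1 :
    (1 + PowerSeries.X) ^ 2 * kingC
      = PowerSeries.X * (1 + PowerSeries.X) + kingA :=
  calc (1 + PowerSeries.X) ^ 2 * kingC
    _ = (1 + PowerSeries.X) * ((1 + PowerSeries.X) * kingC) := by ring
    _ = (1 + PowerSeries.X) * (PowerSeries.X + kingB) := by rw [one_add_X_mul_kingC]
    _ = PowerSeries.X * (1 + PowerSeries.X) + (1 + PowerSeries.X) * kingB := by ring
    _ = PowerSeries.X * (1 + PowerSeries.X) + kingA := by rw [one_add_X_mul_kingB]
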